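/- Let n ∈ {2, 3}. There exists a constant C > 0 such that for every v ∈ C_c^∞(ℝⁿ) and every r > 0, r^{(n−1)/2} ‖v(rω)‖_{L⁴(S^{n−1}, dS_ω)} ≤ C ‖∇v‖_{L²(ℝⁿ)}^{1/2} (Σ_{|α| ≤ 1} ‖Ω^α v‖_{L²(ℝⁿ)})^{1/2}, where for n = 2, Ω^α ranges over the identity and Ω_{12}, and for n = 3, Ω^α = Ω_{12}^{α₁}Ω_{13}^{α₂}Ω_{23}^{α₃} ranges over compositions of the rotation fields of total order at most 1. -/

import Mathlib

/-!
Write `n = d + 1` with `d = 1, 2`, and `F(ρ) = ∫_{S^d} v(ρω)⁴ dω`. The quantity to bound is the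
square root of `X_r = r^d F(r)^{1/2}`.

Since `v` has compact support, the fundamental theorem of calculus along rays gives
`v(rω)⁴ ≤ ∫_r^∞ 4 |v|³ |∇v| (ρω) dρ` (`pow_four_le_radial`). On each sphere of radius `ρ`, the
Cauchy–Schwarz inequality and the embedding `W^{1,1}(S^d) ⊂ L²(S^d)` applied to `v³`, followed by
another Cauchy–Schwarz, give
`∫_S |v|³ |∇v| ≤ C F(ρ)^{1/2} ‖∇v(ρ·)‖_{L²(S)} ‖(|v| + ∑ |Ω_{jk} v|)(ρ·)‖_{L²(S)}`
(`sphere_cubic`). Integrating over `ρ > r`, with `r^{2d} ≤ ρ^{2d}`, Cauchy–Schwarz in `ρ` and polar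
coordinates, yields `X_r² ≤ A · sup_ρ X_ρ` where `A = C ‖∇v‖_{L²} ∑_{|α| ≤ 1} ‖Ω^α v‖_{L²}`
(`sphere_quadratic`). The supremum is finite because `v` is bounded with bounded support, hence it
is at most `A` (`sphSup_le`), and the theorem follows by taking square roots.

The embedding on the sphere (`sphere_sobolev`) is reduced to the cube `[-1, 1]^d` by centrally
projecting the faces of `[-1, 1]^{d+1}`. Integrals over the sphere and over the faces are comparable
(`sphere_le_faces`, `face_le_sphere`): extend a function to the unit ball constantly along rays and
compare polar coordinates with slicing by hyperplanes. On the cube the embedding is elementary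
(`cube_sobolev`). Tangential derivatives are combinations of rotation fields because
`|P|² L τ - ⟨P, τ⟩ L P = ∑ P_j τ_k (P_j L_k - P_k L_j)` (`enorm_tangential_le`).
-/

open MeasureTheory Real ENNReal FourierTransform
open scoped ContDiff

noncomputable section

/-- Euclidean space ℝⁿ. -/
abbrev Spc (n : ℕ) := EuclideanSpace ℝ (Fin n)

/-- Space-time ℝ × ℝⁿ. -/
abbrev STn (n : ℕ) := ℝ × Spc n

variable {n : ℕ}

/-- Directional derivative in the space-time direction `v`. -/
def dirD (v : STn n) (f : STn n → ℝ) : STn n → ℝ := fun p => fderiv ℝ f p v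

/-- Time derivative ∂_t. -/
def dtD : (STn n → ℝ) → STn n → ℝ := dirD (1, 0)

/-- Spatial derivative ∂_j. -/
def dxD (j : Fin n) : (STn n → ℝ) → STn n → ℝ := dirD (0, EuclideanSpace.single j 1)

/-- Spatial Laplacian. -/
def lapD (f : STn n → ℝ) : STn n → ℝ := fun p => ∑ j, dxD j (dxD j f) p

/-- d'Alembertian □ = ∂_t² − Δ. -/
def boxD (f : STn n → ℝ) : STn n → ℝ := fun p => dtD (dtD f) p - lapD f p

/-- Lorentz boost L_j = t ∂_j + x_j ∂_t. -/
def LD (j : Fin n) (f : STn n → ℝ) : STn n → ℝ := fun p => p.1 * dxD j f p + p.2 j * dtD f p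

/-- Rotation Ω_{jk} = x_j ∂_k − x_k ∂_j. -/
def RotD (j k : Fin n) (f : STn n → ℝ) : STn n → ℝ := fun p => p.2 j * dxD k f p - p.2 k * dxD j f p

/-- Scaling S = t ∂_t + x·∇. -/
def SD (f : STn n → ℝ) : STn n → ℝ := fun p => p.1 * dtD f p + ∑ j, p.2 j * dxD j f p

/-- Index type for the Klainerman vector fields. -/
def GIdx (n : ℕ) := Option (Fin n) ⊕ Fin n ⊕ (Fin n × Fin n) ⊕ Unit

instance : Fintype (GIdx n) := by unfold GIdx; infer_instance
instance : DecidableEq (GIdx n) := by unfold GIdx; infer_instance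

/-- The Klainerman vector field with index `i`. -/
def Gop : GIdx n → (STn n → ℝ) → STn n → ℝ
  | Sum.inl none => dtD
  | Sum.inl (some j) => dxD j
  | Sum.inr (Sum.inl j) => LD j
  | Sum.inr (Sum.inr (Sum.inl jk)) => RotD jk.1 jk.2
  | Sum.inr (Sum.inr (Sum.inr _)) => SD

/-- Iterated composition Γ^α along a word of indices. -/
def GwL : List (GIdx n) → (STn n → ℝ) → STn n → ℝ
  | [], f => f
  | a :: l, f => Gop a (GwL l f)

/-- Sum of a quantity over all products of at most `N` Klainerman vector fields. -/
def SumW (N : ℕ) (Φ : (STn n → ℝ) → ℝ≥0∞) (f : STn n → ℝ) : ℝ≥0∞ :=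
  ∑ m ∈ Finset.range (N + 1), ∑ w : Fin m → GIdx n, Φ (GwL (List.ofFn w) f)

/-- Pointwise norm of the full space-time gradient ∂u = (∂_t u, ∇_x u). -/
def gradN (f : STn n → ℝ) (p : STn n) : ℝ := Real.sqrt ((dtD f p) ^ 2 + ∑ j, (dxD j f p) ^ 2)

/-- Fourier transform (in space) of a real valued function. -/
def fourierS (g : Spc n → ℝ) : Spc n → ℂ := 𝓕 (fun x => (g x : ℂ))

/-- ‖ |D|^s g ‖_{L²}, i.e. the L² norm of ξ ↦ |ξ|^s (ℱ g)(ξ). -/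
def DsN (s : ℝ) (g : Spc n → ℝ) : ℝ≥0∞ :=
  eLpNorm (fun ξ : Spc n => ‖ξ‖ ^ s * ‖fourierS g ξ‖) 2 volume

/-- The surface measure on the unit sphere of ℝⁿ. -/
def sphM (n : ℕ) : Measure (Metric.sphere (0 : Spc n) 1) := (volume : Measure (Spc n)).toSphere

/-- The L^q norm of g(r ω) over the unit sphere. -/
def sphN (n : ℕ) (q : ℝ) (g : Spc n → ℝ) (r : ℝ) : ℝ≥0∞ :=
  (∫⁻ o, (‖g (r • (o : Spc n))‖₊ : ℝ≥0∞) ^ q ∂(sphM n)) ^ (1 / q)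

/-- The mixed norm ‖g‖_{p,q} = (∫_0^∞ ‖g(r·)‖_{L^q(S^{n-1})}^p r^{n-1} dr)^{1/p}. -/
def mixN (n : ℕ) (p q : ℝ) (g : Spc n → ℝ) : ℝ≥0∞ :=
  (∫⁻ r in Set.Ioi (0 : ℝ), (sphN n q g r) ^ p * ENNReal.ofReal (r ^ (n - 1))) ^ (1 / p)

/-- A space-time function which is Schwartz in the space variable for each fixed time. -/
def SchwartzInX (v : STn n → ℝ) : Prop :=
  ∀ t : ℝ, ∃ φ : SchwartzMap (Spc n) ℝ, ∀ x, v (t, x) = φ x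

/-- The space-time partial derivatives ∂_0 = ∂_t, ∂_j (j = 1,2,3) on ℝ × ℝ³. -/
def pd4 (α : Fin 4) : (STn 3 → ℝ) → STn 3 → ℝ := Fin.cases dtD (fun j => dxD j) α

/-- The null condition for a set of coefficients {A^{αβ}}. -/
def NullCond (A : Fin 4 → Fin 4 → ℝ) : Prop :=
  ∀ X : Fin 4 → ℝ, (X 0) ^ 2 = (X 1) ^ 2 + (X 2) ^ 2 + (X 3) ^ 2 →
    ∑ α, ∑ β, A α β * X α * X β = 0

/-- The null form A^{αβ} (∂_α v)(∂_β w). -/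
def QF (A : Fin 4 → Fin 4 → ℝ) (v w : STn 3 → ℝ) (p : STn 3) : ℝ :=
  ∑ α, ∑ β, A α β * pd4 α v p * pd4 β w p

/-- The good derivative T_j = ∂_j + (x_j/|x|) ∂_t. -/
def TD (j : Fin 3) (f : STn 3 → ℝ) (p : STn 3) : ℝ := dxD j f p + (p.2 j / ‖p.2‖) * dtD f p

end

/-! ### The embedding `W^{1,1} ⊂ L²` on cubes of dimension one and two -/

lemma enorm_sub_le_lintegral_deriv {u u' : ℝ → ℝ} (hu : ∀ s, HasDerivAt u (u' s) s)
    (hc : Continuous u') {a b : ℝ} (hab : a ≤ b) :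
    ‖u b - u a‖ₑ ≤ ∫⁻ s in Set.Ioc a b, ‖u' s‖ₑ := by
  rw [← intervalIntegral.integral_eq_sub_of_hasDerivAt (fun s _ => hu s)
    (hc.intervalIntegrable a b), intervalIntegral.integral_of_le hab]
  exact enorm_integral_le_lintegral_enorm _

/-- The one-dimensional embedding `W^{1,1} ⊂ L^∞` on `[-1, 1]`: compare `u a` with `u s` and
average over `s`. -/
lemma enorm_le_lintegral_interval {u u' : ℝ → ℝ} (hu : ∀ s, HasDerivAt u (u' s) s)
    (hc : Continuous u') {a : ℝ} (ha : a ∈ Set.Icc (-1 : ℝ) 1) :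
    ‖u a‖ₑ ≤ ∫⁻ s in Set.Icc (-1 : ℝ) 1, (‖u s‖ₑ + ‖u' s‖ₑ) := by
  have hcu : Continuous u := continuous_iff_continuousAt.2 fun s => (hu s).continuousAt
  set D := ∫⁻ s in Set.Icc (-1 : ℝ) 1, ‖u' s‖ₑ with hD
  have key : ∀ s ∈ Set.Icc (-1 : ℝ) 1, ‖u a‖ₑ ≤ ‖u s‖ₑ + D := by
    intro s hs
    have h1 : ‖u a - u s‖ₑ ≤ D := by
      rcases le_total s a with h | h
      · refine (enorm_sub_le_lintegral_deriv hu hc h).trans (lintegral_mono_set ?_)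
        intro x hx
        exact ⟨hs.1.trans hx.1.le, hx.2.trans ha.2⟩
      · rw [enorm_sub_rev]
        refine (enorm_sub_le_lintegral_deriv hu hc h).trans (lintegral_mono_set ?_)
        intro x hx
        exact ⟨ha.1.trans hx.1.le, hx.2.trans hs.2⟩
    calc ‖u a‖ₑ = ‖u s + (u a - u s)‖ₑ := by ring_nf
      _ ≤ ‖u s‖ₑ + ‖u a - u s‖ₑ := enorm_add_le _ _
      _ ≤ _ := by gcongr
  have h2 : ∫⁻ s in Set.Icc (-1 : ℝ) 1, ‖u a‖ₑ ≤ ∫⁻ s in Set.Icc (-1 : ℝ) 1, (‖u s‖ₑ + D) :=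
    setLIntegral_mono' measurableSet_Icc key
  have hv : volume (Set.Icc (-1 : ℝ) 1) = 2 := by
    rw [Real.volume_Icc]; norm_num
  rw [lintegral_add_left (by fun_prop), setLIntegral_const, setLIntegral_const, hv] at h2
  rw [lintegral_add_left (by fun_prop)]
  have h3 : ‖u a‖ₑ * 2 ≤ ((∫⁻ s in Set.Icc (-1 : ℝ) 1, ‖u s‖ₑ) + D) * 2 := by
    refine h2.trans ?_
    rw [add_mul]
    gcongr
    exact le_mul_of_one_le_right zero_le (by norm_num)
  exact (ENNReal.mul_le_mul_iff_left two_ne_zero ENNReal.ofNat_ne_top).1 h3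

/-- The cube `[-1, 1]^d`. -/
def cubeQ (d : ℕ) : Set (Fin d → ℝ) := Set.univ.pi fun _ => Set.Icc (-1 : ℝ) 1

lemma measurableSet_cubeQ (d : ℕ) : MeasurableSet (cubeQ d) :=
  MeasurableSet.univ_pi fun _ => measurableSet_Icc

lemma lintegral_cubeQ_one (f : (Fin 1 → ℝ) → ℝ≥0∞) :
    ∫⁻ y in cubeQ 1, f y = ∫⁻ s in Set.Icc (-1 : ℝ) 1, f (fun _ => s) := by
  have h0 : MeasurePreserving (MeasurableEquiv.funUnique (Fin 1) ℝ) volume volume := by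
    convert volume_preserving_funUnique (Fin 1) ℝ
  have h := h0.symm
  rw [← h.setLIntegral_comp_preimage_emb (MeasurableEquiv.measurableEmbedding _) f (cubeQ 1)]
  congr 2
  ext s
  simp only [cubeQ, Set.mem_preimage, Set.mem_univ_pi, Fin.forall_fin_one]
  rfl

lemma lintegral_cubeQ_two (f : (Fin 2 → ℝ) → ℝ≥0∞) (hf : Measurable f) :
    ∫⁻ y in cubeQ 2, f y =
      ∫⁻ a in Set.Icc (-1 : ℝ) 1, ∫⁻ b in Set.Icc (-1 : ℝ) 1, f ![a, b] := by
  have h := (volume_preserving_finTwoArrow ℝ).symm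
  rw [← h.setLIntegral_comp_preimage_emb (MeasurableEquiv.measurableEmbedding _) f (cubeQ 2)]
  have : (MeasurableEquiv.finTwoArrow (α := ℝ)).symm ⁻¹' cubeQ 2
      = Set.Icc (-1 : ℝ) 1 ×ˢ Set.Icc (-1 : ℝ) 1 := by
    ext s
    simp only [cubeQ, Set.mem_preimage, Set.mem_univ_pi, Fin.forall_fin_two, Set.mem_prod]
    rfl
  rw [this, Measure.volume_eq_prod, setLIntegral_prod]
  · rfl
  · exact (hf.comp (MeasurableEquiv.measurable _)).aemeasurable

/-- The embedding `W^{1,1} ⊂ L²` on the cube of dimension one or two. In dimension two it is the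
Gagliardo–Nirenberg argument: `|u(a,b)|` is bounded both by a function of `a` and by a function
of `b`, each integrating to the `W^{1,1}` norm. -/
lemma cube_sobolev {d : ℕ} (hd : d = 1 ∨ d = 2) {u : (Fin d → ℝ) → ℝ} (hu : ContDiff ℝ 1 u)
    {g : (Fin d → ℝ) → ℝ≥0∞} (hg : Measurable g)
    (hug : ∀ y j, ‖fderiv ℝ u y (Pi.single j 1)‖ₑ ≤ g y) :
    ∫⁻ y in cubeQ d, ‖u y‖ₑ ^ 2 ≤ 2 * (∫⁻ y in cubeQ d, (‖u y‖ₑ + g y)) ^ 2 := by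
  have hdu := hu.differentiable one_ne_zero
  have hcu := hu.continuous
  have hcf : Continuous (fderiv ℝ u) := hu.continuous_fderiv one_ne_zero
  have hv : volume (Set.Icc (-1 : ℝ) 1) = 2 := by
    rw [Real.volume_Icc]; norm_num
  rcases hd with rfl | rfl
  · rw [lintegral_cubeQ_one, lintegral_cubeQ_one]
    have hder : ∀ s : ℝ, HasDerivAt (fun s : ℝ => (fun _ => s : Fin 1 → ℝ)) (Pi.single 0 1) s := by
      intro s
      rw [hasDerivAt_pi]
      intro i
      fin_cases i
      simpa using hasDerivAt_id' s
    have h1 : ∀ a ∈ Set.Icc (-1 : ℝ) 1, ‖u (fun _ => a)‖ₑ ^ 2 ≤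
        (∫⁻ s in Set.Icc (-1 : ℝ) 1, (‖u (fun _ => s)‖ₑ + g (fun _ => s))) ^ 2 := by
      intro a ha
      gcongr
      refine (enorm_le_lintegral_interval (u := fun s => u (fun _ => s))
        (u' := fun s => fderiv ℝ u (fun _ => s) (Pi.single 0 1))
        (fun s => (hdu _).hasFDerivAt.comp_hasDerivAt s (hder s))
        (by fun_prop) ha).trans ?_
      gcongr
      exact hug _ _
    refine (setLIntegral_mono' measurableSet_Icc h1).trans ?_
    rw [setLIntegral_const, hv, mul_comm]
  · rw [lintegral_cubeQ_two _ (by fun_prop), lintegral_cubeQ_two _ (by fun_prop)]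
    set G : ℝ → ℝ → ℝ≥0∞ := fun a b => ‖u ![a, b]‖ₑ + g ![a, b] with hG
    have hGm : Measurable (Function.uncurry G) := by
      have : Measurable (fun p : ℝ × ℝ => ![p.1, p.2]) := by fun_prop
      exact (hcu.measurable.comp this).enorm.add (hg.comp this)
    have hder0 : ∀ b s : ℝ, HasDerivAt (fun s : ℝ => ![s, b]) (Pi.single 0 1) s := by
      intro b s
      rw [hasDerivAt_pi]
      intro i
      fin_cases i
      · simpa using hasDerivAt_id' s
      · simpa using hasDerivAt_const s b
    have hder1 : ∀ a s : ℝ, HasDerivAt (fun s : ℝ => ![a, s]) (Pi.single 1 1) s := by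
      intro b s
      rw [hasDerivAt_pi]
      intro i
      fin_cases i
      · simpa using hasDerivAt_const s b
      · simpa using hasDerivAt_id' s
    have hA : ∀ a ∈ Set.Icc (-1 : ℝ) 1, ∀ b, ‖u ![a, b]‖ₑ ≤ ∫⁻ s in Set.Icc (-1 : ℝ) 1, G s b := by
      intro a ha b
      refine (enorm_le_lintegral_interval (u := fun s => u ![s, b])
        (u' := fun s => fderiv ℝ u ![s, b] (Pi.single 0 1))
        (fun s => (hdu _).hasFDerivAt.comp_hasDerivAt s (hder0 b s))
        (by fun_prop) ha).trans ?_
      exact lintegral_mono fun s => add_le_add le_rfl (hug _ _)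
    have hB : ∀ a, ∀ b ∈ Set.Icc (-1 : ℝ) 1, ‖u ![a, b]‖ₑ ≤ ∫⁻ s in Set.Icc (-1 : ℝ) 1, G a s := by
      intro a b hb
      refine (enorm_le_lintegral_interval (u := fun s => u ![a, s])
        (u' := fun s => fderiv ℝ u ![a, s] (Pi.single 1 1))
        (fun s => (hdu _).hasFDerivAt.comp_hasDerivAt s (hder1 a s))
        (by fun_prop) hb).trans ?_
      exact lintegral_mono fun s => add_le_add le_rfl (hug _ _)
    have hm : Measurable fun b => ∫⁻ s in Set.Icc (-1 : ℝ) 1, G s b :=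
      Measurable.lintegral_prod_left (f := G) hGm
    have hm' : Measurable fun a => ∫⁻ s in Set.Icc (-1 : ℝ) 1, G a s :=
      Measurable.lintegral_prod_right (f := G) hGm
    calc ∫⁻ a in Set.Icc (-1 : ℝ) 1, ∫⁻ b in Set.Icc (-1 : ℝ) 1, ‖u ![a, b]‖ₑ ^ 2
        ≤ ∫⁻ a in Set.Icc (-1 : ℝ) 1, ∫⁻ b in Set.Icc (-1 : ℝ) 1,
            (∫⁻ s in Set.Icc (-1 : ℝ) 1, G a s) * (∫⁻ s in Set.Icc (-1 : ℝ) 1, G s b) := by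
          refine setLIntegral_mono' measurableSet_Icc fun a ha => ?_
          refine setLIntegral_mono' measurableSet_Icc fun b hb => ?_
          rw [pow_two]
          exact mul_le_mul' (hB a b hb) (hA a ha b)
      _ = (∫⁻ a in Set.Icc (-1 : ℝ) 1, ∫⁻ s in Set.Icc (-1 : ℝ) 1, G a s) *
            ∫⁻ b in Set.Icc (-1 : ℝ) 1, ∫⁻ s in Set.Icc (-1 : ℝ) 1, G s b := by
          simp_rw [lintegral_const_mul _ hm]
          rw [lintegral_mul_const _ hm']
      _ = (∫⁻ a in Set.Icc (-1 : ℝ) 1, ∫⁻ s in Set.Icc (-1 : ℝ) 1, G a s) ^ 2 := by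
          rw [pow_two]
          congr 1
          exact lintegral_lintegral_swap (f := fun b s => G s b)
            (hGm.comp measurable_swap).aemeasurable
      _ ≤ _ := le_mul_of_one_le_left zero_le (by norm_num)

/-! ### Polar coordinates, and slicing of the cones over the faces of a cube -/

/-- Integration in polar coordinates with respect to the surface measure `sphM`. -/
lemma lintegral_polar {d : ℕ} {f : Spc (d + 1) → ℝ≥0∞} (hf : Measurable f) :
    ∫⁻ x, f x = ∫⁻ r in Set.Ioi (0 : ℝ), ENNReal.ofReal (r ^ d) *
      ∫⁻ o, f (r • (o : Spc (d + 1))) ∂(sphM (d + 1)) := by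
  have hmp := (volume : Measure (Spc (d + 1))).measurePreserving_homeomorphUnitSphereProd
  have hdim : Module.finrank ℝ (Spc (d + 1)) - 1 = d := by simp
  rw [hdim] at hmp
  calc ∫⁻ x, f x = ∫⁻ x : ({(0)}ᶜ : Set (Spc (d + 1))), f x.1 ∂(volume.comap Subtype.val) := by
        rw [lintegral_subtype_comap (measurableSet_singleton _).compl f, restrict_compl_singleton]
    _ = ∫⁻ p, f (p.2.1 • (p.1 : Spc (d + 1))) ∂(sphM (d + 1)).prod (.volumeIoiPow d) := by
        rw [sphM, ← hmp.lintegral_comp_emb (Homeomorph.measurableEmbedding _)]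
        refine lintegral_congr fun x => ?_
        have := (homeomorphUnitSphereProd (Spc (d + 1))).symm_apply_apply x
        rw [← homeomorphUnitSphereProd_symm_apply_coe, this]
    _ = ∫⁻ r, ∫⁻ o, f (r.1 • (o : Spc (d + 1))) ∂(sphM (d + 1)) ∂(Measure.volumeIoiPow d) := by
        have : SFinite (sphM (d + 1)) := by unfold sphM; infer_instance
        rw [lintegral_prod_symm]
        exact (hf.comp (by fun_prop)).aemeasurable
    _ = ∫⁻ r in Set.Ioi (0 : ℝ), ENNReal.ofReal (r ^ d) *
      ∫⁻ o, f (r • (o : Spc (d + 1))) ∂(sphM (d + 1)) := by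
        have : SFinite (sphM (d + 1)) := by unfold sphM; infer_instance
        have hm : Measurable fun r : ℝ => ∫⁻ o, f (r • (o : Spc (d + 1))) ∂(sphM (d + 1)) := by
          apply Measurable.lintegral_prod_right
            (f := fun (r : ℝ) (o : Metric.sphere (0 : Spc (d + 1)) 1) => f (r • (o : Spc (d + 1))))
          exact hf.comp (by fun_prop)
        rw [Measure.volumeIoiPow, lintegral_withDensity_eq_lintegral_mul _ (by fun_prop)
          (by exact hm.comp measurable_subtype_coe)]
        exact lintegral_subtype_comap measurableSet_Ioi
          (fun r : ℝ => ENNReal.ofReal (r ^ d) * ∫⁻ o, f (r • (o : Spc (d + 1))) ∂(sphM (d + 1)))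

/-- The point of the hyperplane `x i = 1` with remaining coordinates `y`. -/
def faceE {d : ℕ} (i : Fin (d + 1)) (y : Fin d → ℝ) : Spc (d + 1) :=
  WithLp.toLp 2 (i.insertNth 1 y)

/-- Central projection of `faceE i y` to the unit sphere. -/
noncomputable def faceP {d : ℕ} (i : Fin (d + 1)) (y : Fin d → ℝ) : Spc (d + 1) :=
  ‖faceE i y‖⁻¹ • faceE i y

/-- The double cone over the two faces of the cube `[-1, 1]^{d+1}` orthogonal to the axis `i`. -/
def coneK {d : ℕ} (i : Fin (d + 1)) : Set (Spc (d + 1)) := {x | ∀ j, |x j| ≤ |x i|}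

lemma measurableSet_coneK {d : ℕ} (i : Fin (d + 1)) : MeasurableSet (coneK i) := by
  have : IsClosed (coneK i) := by
    simp only [coneK, Set.ofPred_forall]
    exact isClosed_iInter fun j => isClosed_le (by fun_prop) (by fun_prop)
  exact this.measurableSet

lemma continuous_faceE {d : ℕ} (i : Fin (d + 1)) : Continuous (faceE i) := by
  unfold faceE
  exact (PiLp.continuous_toLp 2 _).comp (continuous_const.finInsertNth i continuous_id)

lemma smul_faceE {d : ℕ} (i : Fin (d + 1)) (t : ℝ) (y : Fin d → ℝ) :
    t • faceE i y = WithLp.toLp 2 (i.insertNth t (t • y)) := by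
  ext j
  refine Fin.succAboveCases i ?_ (fun k => ?_) j <;> simp [faceE]

lemma smul_faceE_mem_coneK {d : ℕ} (i : Fin (d + 1)) {t : ℝ} (ht : t ≠ 0) (y : Fin d → ℝ) :
    t • faceE i y ∈ coneK i ↔ y ∈ cubeQ d := by
  have ht' : 0 < |t| := abs_pos.2 ht
  simp only [coneK, Set.mem_ofPred_eq, cubeQ, Set.mem_univ_pi, Set.mem_Icc, ← abs_le]
  rw [Fin.forall_iff_succAbove i]
  simp [faceE, abs_mul, ht']

/-- Slicing `ℝ^{d+1}` by the hyperplanes orthogonal to the axis `i`. -/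
lemma lintegral_slice {d : ℕ} (i : Fin (d + 1)) {F : Spc (d + 1) → ℝ≥0∞} (hFm : Measurable F) :
    ∫⁻ x, F x = ∫⁻ t : ℝ, ∫⁻ y : Fin d → ℝ, F (WithLp.toLp 2 (i.insertNth t y)) := by
  have h1 := (PiLp.volume_preserving_toLp (Fin (d + 1))).lintegral_comp hFm
  have hFm' : Measurable fun a : Fin (d + 1) → ℝ => F (WithLp.toLp 2 a) :=
    hFm.comp (PiLp.continuous_toLp 2 _).measurable
  have h2 := (volume_preserving_piFinSuccAbove (fun _ : Fin (d + 1) => ℝ) i).symm.lintegral_comp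
    hFm'
  have hm : Measurable fun p : ℝ × (Fin d → ℝ) => F (WithLp.toLp 2 (i.insertNth p.1 p.2)) := by
    have : Continuous fun p : ℝ × (Fin d → ℝ) => (i.insertNth p.1 p.2 : Fin (d + 1) → ℝ) :=
      Continuous.finInsertNth i continuous_fst continuous_snd
    exact hFm'.comp this.measurable
  rw [← h1, ← h2]
  exact lintegral_prod _ hm.aemeasurable

/-- Polar-type coordinates on the double cone: slice by the hyperplanes `x i = t` and rescale
each slice. -/
lemma lintegral_coneK {d : ℕ} (i : Fin (d + 1)) {f : Spc (d + 1) → ℝ≥0∞} (hf : Measurable f) :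
    ∫⁻ x in coneK i, f x =
      ∫⁻ t : ℝ, ENNReal.ofReal (|t| ^ d) * ∫⁻ y in cubeQ d, f (t • faceE i y) := by
  set F : Spc (d + 1) → ℝ≥0∞ := (coneK i).indicator f with hF
  have hFm : Measurable F := hf.indicator (measurableSet_coneK i)
  rw [← lintegral_indicator (measurableSet_coneK i), ← hF]
  rw [lintegral_slice i hFm]
  refine lintegral_congr_ae ?_
  filter_upwards [(measure_eq_zero_iff_ae_notMem.1 (measure_singleton (0 : ℝ)) :
    ∀ᵐ t : ℝ, t ∉ ({0} : Set ℝ))] with t ht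
  have ht : t ≠ 0 := by simpa using ht
  have hmt : Measurable fun y : Fin d → ℝ => F (WithLp.toLp 2 (i.insertNth t y)) :=
    hFm.comp ((PiLp.continuous_toLp 2 _).comp
      (Continuous.finInsertNth i continuous_const continuous_id)).measurable
  have h3 := Measure.map_addHaar_smul (volume : Measure (Fin d → ℝ)) ht
  have h4 : ∫⁻ y : Fin d → ℝ, F (WithLp.toLp 2 (i.insertNth t (t • y))) =
      ENNReal.ofReal |(t ^ d)⁻¹| * ∫⁻ y : Fin d → ℝ, F (WithLp.toLp 2 (i.insertNth t y)) := by
    rw [← lintegral_map (f := fun y : Fin d → ℝ => F (WithLp.toLp 2 (i.insertNth t y))) hmt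
      (by fun_prop), h3, lintegral_smul_measure]
    simp
  have h5 : ∫⁻ y in cubeQ d, f (t • faceE i y) =
      ∫⁻ y : Fin d → ℝ, F (WithLp.toLp 2 (i.insertNth t (t • y))) := by
    rw [← lintegral_indicator (measurableSet_cubeQ d)]
    refine lintegral_congr fun y => ?_
    rw [← smul_faceE, hF]
    by_cases hy : y ∈ cubeQ d
    · rw [Set.indicator_of_mem hy, Set.indicator_of_mem ((smul_faceE_mem_coneK i ht y).2 hy)]
    · rw [Set.indicator_of_notMem hy,
        Set.indicator_of_notMem (fun h => hy ((smul_faceE_mem_coneK i ht y).1 h))]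
  rw [h5, h4, ← mul_assoc, ← ENNReal.ofReal_mul (by positivity), abs_inv, abs_pow,
    mul_inv_cancel₀ (by positivity), ENNReal.ofReal_one, one_mul]

lemma one_le_norm_faceE {d : ℕ} (i : Fin (d + 1)) (y : Fin d → ℝ) : 1 ≤ ‖faceE i y‖ := by
  have := PiLp.norm_apply_le (faceE i y) i
  simpa [faceE] using this

lemma norm_faceE_le {d : ℕ} (i : Fin (d + 1)) {y : Fin d → ℝ} (hy : y ∈ cubeQ d) :
    ‖faceE i y‖ ≤ d + 1 := by
  have h : ‖faceE i y‖ ^ 2 ≤ (d + 1 : ℝ) ^ 2 := by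
    rw [EuclideanSpace.real_norm_sq_eq, Fin.sum_univ_succAbove _ i]
    have : ∑ k, (faceE i y (i.succAbove k)) ^ 2 ≤ ∑ k : Fin d, (1 : ℝ) := by
      refine Finset.sum_le_sum fun k _ => ?_
      have := hy k trivial
      simp only [faceE, Fin.insertNth_apply_succAbove]
      rw [sq_le_one_iff_abs_le_one, abs_le]
      exact this
    simp at this
    simp only [faceE, Fin.insertNth_apply_same] at this ⊢
    nlinarith [(Nat.cast_nonneg d : (0 : ℝ) ≤ d)]
  exact le_of_sq_le_sq h (by positivity)

lemma norm_faceP {d : ℕ} (i : Fin (d + 1)) (y : Fin d → ℝ) : ‖faceP i y‖ = 1 := by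
  have := one_le_norm_faceE i y
  rw [faceP, norm_smul, norm_inv, norm_norm, inv_mul_cancel₀ (by positivity)]

/-! ### Comparison of the surface measure with the faces of a cube -/

/-- The extension of `G` from the unit sphere to the punctured unit ball, constant along rays. -/
noncomputable def radExt {d : ℕ} (G : Spc (d + 1) → ℝ≥0∞) : Spc (d + 1) → ℝ≥0∞ :=
  {x : Spc (d + 1) | 0 < ‖x‖ ∧ ‖x‖ < 1}.indicator fun x => G (‖x‖⁻¹ • x)

lemma measurable_radExt {d : ℕ} {G : Spc (d + 1) → ℝ≥0∞} (hG : Measurable G) :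
    Measurable (radExt G) := by
  refine Measurable.indicator (hG.comp (by fun_prop)) ?_
  exact (measurableSet_lt measurable_const measurable_norm).inter
    (measurableSet_lt measurable_norm measurable_const)

lemma radExt_smul {d : ℕ} (G : Spc (d + 1) → ℝ≥0∞) {x : Spc (d + 1)} (hx : x ≠ 0)
    {t : ℝ} (ht : 0 < t) (ht' : t * ‖x‖ < 1) : radExt G (t • x) = G (‖x‖⁻¹ • x) := by
  have hx' : 0 < ‖x‖ := norm_pos_iff.2 hx
  have hn : ‖t • x‖ = t * ‖x‖ := by rw [norm_smul, Real.norm_of_nonneg ht.le]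
  have hm : t • x ∈ {x : Spc (d + 1) | 0 < ‖x‖ ∧ ‖x‖ < 1} := by
    simp only [Set.mem_ofPred_eq, hn]
    exact ⟨by positivity, ht'⟩
  rw [radExt, Set.indicator_of_mem hm, hn, smul_smul]
  congr 2
  field_simp

lemma radExt_eq_zero {d : ℕ} (G : Spc (d + 1) → ℝ≥0∞) {x : Spc (d + 1)} (hx : 1 ≤ ‖x‖) :
    radExt G x = 0 := by
  rw [radExt, Set.indicator_of_notMem]
  simp only [Set.mem_ofPred_eq, not_and, not_lt]
  exact fun _ => hx

/-- In polar coordinates the integral of `radExt G` is a constant times that of `G` over the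
sphere. -/
lemma lintegral_radExt {d : ℕ} {G : Spc (d + 1) → ℝ≥0∞} (hG : Measurable G) :
    ∫⁻ x, radExt G x = (∫⁻ r in Set.Ioo (0 : ℝ) 1, ENNReal.ofReal (r ^ d)) *
      ∫⁻ o, G o ∂(sphM (d + 1)) := by
  rw [lintegral_polar (measurable_radExt hG), ← lintegral_mul_const _ (by fun_prop),
    ← Set.Ioi_inter_Iio, Set.inter_comm, ← Measure.restrict_restrict measurableSet_Iio,
    ← lintegral_indicator measurableSet_Iio]
  refine setLIntegral_congr_fun measurableSet_Ioi fun r hr => ?_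
  have ho : ∀ o : Metric.sphere (0 : Spc (d + 1)) 1, ‖(o : Spc (d + 1))‖ = 1 := fun o => by simp
  by_cases h1 : r < 1
  · simp only [Set.indicator_of_mem (show r ∈ Set.Iio 1 from h1)]
    congr 1
    refine lintegral_congr fun o => ?_
    rw [radExt_smul G (norm_ne_zero_iff.1 (by rw [ho]; norm_num)) hr (by rw [ho]; simpa using h1),
      ho]
    simp
  · simp only [Set.indicator_of_notMem (show r ∉ Set.Iio 1 from h1)]
    have : ∀ o : Metric.sphere (0 : Spc (d + 1)) 1, radExt G (r • (o : Spc (d + 1))) = 0 := by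
      intro o
      apply radExt_eq_zero
      rw [norm_smul, ho, Real.norm_of_nonneg (le_of_lt hr)]
      linarith
    simp [this]

lemma radExt_const_le_one (d : ℕ) : ∫⁻ r in Set.Ioo (0 : ℝ) 1, ENNReal.ofReal (r ^ d) ≤ 1 := by
  calc ∫⁻ r in Set.Ioo (0 : ℝ) 1, ENNReal.ofReal (r ^ d) ≤ ∫⁻ r in Set.Ioo (0 : ℝ) 1, 1 := by
        refine setLIntegral_mono' measurableSet_Ioo fun r hr => ?_
        rw [ENNReal.ofReal_le_one]
        exact pow_le_one₀ hr.1.le hr.2.le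
    _ = 1 := by simp

lemma radExt_const_ne_zero (d : ℕ) :
    ∫⁻ r in Set.Ioo (0 : ℝ) 1, ENNReal.ofReal (r ^ d) ≠ 0 := by
  rw [← pos_iff_ne_zero, setLIntegral_pos_iff (by fun_prop)]
  have : (Function.support fun r : ℝ => ENNReal.ofReal (r ^ d)) ∩ Set.Ioo (0 : ℝ) 1
      = Set.Ioo 0 1 := by
    refine Set.inter_eq_right.2 fun r hr => ?_
    simpa using pow_pos hr.1 d
  rw [this]
  simp

lemma faceE_ne_zero {d : ℕ} (i : Fin (d + 1)) (y : Fin d → ℝ) : faceE i y ≠ 0 :=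
  norm_pos_iff.1 (by linarith [one_le_norm_faceE i y])

lemma continuous_faceP {d : ℕ} (i : Fin (d + 1)) : Continuous (faceP i) := by
  unfold faceP
  exact ((continuous_faceE i).norm.inv₀ fun y => norm_ne_zero_iff.2 (faceE_ne_zero i y)).smul
    (continuous_faceE i)

/-- The sphere integral is controlled by the integrals over the faces of the cube. -/
lemma sphere_le_faces (d : ℕ) : ∃ C : ℝ≥0∞, C ≠ ⊤ ∧ ∀ G : Spc (d + 1) → ℝ≥0∞, Measurable G →
    ∫⁻ o, G o ∂(sphM (d + 1)) ≤
      C * ∑ i : Fin (d + 1), ∫⁻ y in cubeQ d, (G (faceP i y) + G (-faceP i y)) := by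
  set c := ∫⁻ r in Set.Ioo (0 : ℝ) 1, ENNReal.ofReal (r ^ d) with hc
  have hc0 : c ≠ 0 := radExt_const_ne_zero d
  have hct : c ≠ ⊤ := ((radExt_const_le_one d).trans_lt ENNReal.one_lt_top).ne
  refine ⟨c⁻¹ * 2, ENNReal.mul_ne_top (ENNReal.inv_ne_top.2 hc0) ENNReal.ofNat_ne_top, fun G hG => ?_⟩
  have hcov : (⋃ i : Fin (d + 1), coneK i) = Set.univ := by
    refine Set.eq_univ_of_forall fun x => ?_
    obtain ⟨i, -, hi⟩ := Finset.exists_max_image Finset.univ (fun j => |x j|) Finset.univ_nonempty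
    exact Set.mem_iUnion.2 ⟨i, fun j => hi j (Finset.mem_univ j)⟩
  have h1 : c * ∫⁻ o, G o ∂(sphM (d + 1)) ≤ ∑ i : Fin (d + 1), ∫⁻ x in coneK i, radExt G x := by
    rw [← lintegral_radExt hG, ← setLIntegral_univ, ← hcov]
    exact (lintegral_iUnion_le _ _).trans (by rw [tsum_fintype])
  have h2 : ∀ i : Fin (d + 1), ∫⁻ x in coneK i, radExt G x ≤
      2 * ∫⁻ y in cubeQ d, (G (faceP i y) + G (-faceP i y)) := by
    intro i
    rw [lintegral_coneK i (measurable_radExt hG)]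
    set I := ∫⁻ y in cubeQ d, (G (faceP i y) + G (-faceP i y)) with hI
    calc ∫⁻ t : ℝ, ENNReal.ofReal (|t| ^ d) * ∫⁻ y in cubeQ d, radExt G (t • faceE i y)
        ≤ ∫⁻ t : ℝ, (Set.Ioo (-1 : ℝ) 1).indicator (fun _ => I) t := by
          refine lintegral_mono fun t => ?_
          by_cases ht : t ∈ Set.Ioo (-1 : ℝ) 1
          · rw [Set.indicator_of_mem ht]
            have ht1 : |t| ≤ 1 := abs_le.2 ⟨ht.1.le, ht.2.le⟩
            have : ENNReal.ofReal (|t| ^ d) ≤ 1 := by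
              rw [ENNReal.ofReal_le_one]
              exact pow_le_one₀ (abs_nonneg t) ht1
            refine (mul_le_of_le_one_left zero_le this).trans ?_
            refine lintegral_mono fun y => ?_
            by_cases hb : 1 ≤ ‖t • faceE i y‖
            · rw [radExt_eq_zero G hb]; exact zero_le
            push Not at hb
            rw [norm_smul, Real.norm_eq_abs] at hb
            rcases lt_trichotomy t 0 with h | h | h
            · have e : t • faceE i y = (-t) • (-faceE i y) := by simp
              rw [e, radExt_smul G (neg_ne_zero.2 (faceE_ne_zero i y)) (by linarith)
                (by rw [norm_neg]; rwa [abs_of_neg h] at hb), norm_neg, smul_neg]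
              exact le_add_self
            · simp [h, radExt]
            · rw [radExt_smul G (faceE_ne_zero i y) h (by rwa [abs_of_pos h] at hb)]
              exact le_self_add
          · rw [Set.indicator_of_notMem ht]
            have ht1 : 1 ≤ |t| := by
              by_contra hlt
              push Not at hlt
              exact ht (abs_lt.1 hlt)
            have : ∀ y, radExt G (t • faceE i y) = 0 := by
              intro y
              apply radExt_eq_zero
              rw [norm_smul, Real.norm_eq_abs]
              nlinarith [one_le_norm_faceE i y]
            simp [this]
      _ = 2 * I := by
          rw [lintegral_indicator measurableSet_Ioo, setLIntegral_const, Real.volume_Ioo, mul_comm]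
          norm_num
  calc ∫⁻ o, G o ∂(sphM (d + 1)) = c⁻¹ * (c * ∫⁻ o, G o ∂(sphM (d + 1))) := by
        rw [← mul_assoc, ENNReal.inv_mul_cancel hc0 hct, one_mul]
    _ ≤ c⁻¹ * ∑ i : Fin (d + 1), 2 * ∫⁻ y in cubeQ d, (G (faceP i y) + G (-faceP i y)) := by
        gcongr
        exact h1.trans (Finset.sum_le_sum fun i _ => h2 i)
    _ = _ := by rw [← Finset.mul_sum, mul_assoc]

/-- The integral over each face of the cube is controlled by the sphere integral. -/
lemma face_le_sphere (d : ℕ) : ∃ C : ℝ≥0∞, C ≠ ⊤ ∧ ∀ G : Spc (d + 1) → ℝ≥0∞, Measurable G →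
    ∀ (i : Fin (d + 1)) (σ : ℝ), (σ = 1 ∨ σ = -1) →
    ∫⁻ y in cubeQ d, G (σ • faceP i y) ≤ C * ∫⁻ o, G o ∂(sphM (d + 1)) := by
  -- The faces lie in the ball of radius `d + 1`, so for `|t| < b` the slice of the cone at height `t`
  -- lies in the unit ball, where `radExt G` is given by `G`.
  set b : ℝ := 1 / (d + 1) with hb
  have hb0 : 0 < b := by positivity
  set K : ℝ≥0∞ := ENNReal.ofReal ((b / 2) ^ d) * ENNReal.ofReal (b / 2) with hK
  have hK0 : K ≠ 0 := mul_ne_zero (by simp; positivity) (by simp; positivity)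
  have hKt : K ≠ ⊤ := ENNReal.mul_ne_top ENNReal.ofReal_ne_top ENNReal.ofReal_ne_top
  refine ⟨K⁻¹, ENNReal.inv_ne_top.2 hK0, fun G hG i σ hσ => ?_⟩
  set I := ∫⁻ y in cubeQ d, G (σ • faceP i y) with hI
  obtain ⟨T, hTm, hTv, hT⟩ : ∃ T : Set ℝ, MeasurableSet T ∧ volume T = ENNReal.ofReal (b / 2) ∧
      ∀ t ∈ T, b / 2 < σ * t ∧ σ * t < b := by
    rcases hσ with rfl | rfl
    · refine ⟨Set.Ioo (b / 2) b, measurableSet_Ioo, ?_, fun t ht => by simpa using ht⟩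
      rw [Real.volume_Ioo]; ring_nf
    · refine ⟨Set.Ioo (-b) (-(b / 2)), measurableSet_Ioo, ?_, fun t ht => ?_⟩
      · rw [Real.volume_Ioo]; ring_nf
      · constructor <;> linarith [ht.1, ht.2]
  have hσσ : σ * σ = 1 := by rcases hσ with rfl | rfl <;> norm_num
  have habs : |σ| = 1 := by rcases hσ with rfl | rfl <;> simp
  have h1 : K * I ≤ ∫⁻ o, G o ∂(sphM (d + 1)) := by
    calc K * I = ∫⁻ t in T, ENNReal.ofReal ((b / 2) ^ d) * I := by
          rw [setLIntegral_const, hTv, hK]; ring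
      _ ≤ ∫⁻ t in T, ENNReal.ofReal (|t| ^ d) * ∫⁻ y in cubeQ d, radExt G (t • faceE i y) := by
          refine setLIntegral_mono' hTm fun t ht => ?_
          obtain ⟨ht1, ht2⟩ := hT t ht
          have hst : 0 < σ * t := by linarith
          have hat : |t| = σ * t := by
            rw [← abs_of_pos hst, abs_mul, habs, one_mul]
          refine mul_le_mul' (ENNReal.ofReal_le_ofReal ?_) ?_
          · rw [hat]; gcongr
          · refine setLIntegral_mono' (measurableSet_cubeQ d) fun y hy => le_of_eq ?_
            have e : t • faceE i y = (σ * t) • (σ • faceE i y) := by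
              rw [smul_smul, mul_right_comm, hσσ, one_mul]
            have hne : σ • faceE i y ≠ 0 :=
              smul_ne_zero (by rintro rfl; simp at habs) (faceE_ne_zero i y)
            have hn : ‖σ • faceE i y‖ = ‖faceE i y‖ := by
              rw [norm_smul, Real.norm_eq_abs, habs, one_mul]
            have hlt : σ * t * ‖σ • faceE i y‖ < 1 := by
              rw [hn]
              have h2 := norm_faceE_le i hy
              calc σ * t * ‖faceE i y‖ ≤ σ * t * (d + 1) := by gcongr
                _ < b * (d + 1) := by gcongr
                _ = 1 := by rw [hb]; field_simp
            rw [e, radExt_smul G hne hst hlt, hn, smul_comm, faceP]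
      _ ≤ ∫⁻ x in coneK i, radExt G x := by
          rw [lintegral_coneK i (measurable_radExt hG)]
          exact setLIntegral_le_lintegral _ _
      _ ≤ ∫⁻ x, radExt G x := setLIntegral_le_lintegral _ _
      _ ≤ _ := by
          rw [lintegral_radExt hG]
          exact mul_le_of_le_one_left zero_le (radExt_const_le_one d)
  calc I = K⁻¹ * (K * I) := by rw [← mul_assoc, ENNReal.inv_mul_cancel hK0 hKt, one_mul]
    _ ≤ _ := by gcongr

/-! ### The embedding `W^{1,1} ⊂ L²` on spheres -/

/-- The sum of `|Ω_{jk} w|` over all ordered pairs `(j, k)`. -/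
noncomputable def rotSum {n : ℕ} (w : Spc n → ℝ) (x : Spc n) : ℝ≥0∞ :=
  ∑ j, ∑ k, ‖x j * fderiv ℝ w x (EuclideanSpace.single k 1) -
    x k * fderiv ℝ w x (EuclideanSpace.single j 1)‖ₑ

lemma measurable_rotSum {n : ℕ} {w : Spc n → ℝ} (hw : ContDiff ℝ 1 w) :
    Measurable (rotSum w) := by
  have hc : Continuous (fderiv ℝ w) := hw.continuous_fderiv one_ne_zero
  unfold rotSum
  refine Finset.measurable_fun_sum _ fun j _ => Finset.measurable_fun_sum _ fun k _ => ?_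
  apply Measurable.enorm
  apply Continuous.measurable
  fun_prop

/-- Derivatives along tangent vectors of the sphere are combinations of rotation fields:
`∑ P_j τ_k (P_j L_k - P_k L_j) = |P|² L τ - ⟨P, τ⟩ L P = L τ`. -/
lemma enorm_tangential_le {n : ℕ} (L : Spc n →L[ℝ] ℝ) {P τ : Spc n} (hP : ‖P‖ = 1)
    (hτ : ‖τ‖ ≤ 1) (hPτ : inner ℝ P τ = 0) (r : ℝ) :
    ‖L (r • τ)‖ₑ ≤ ∑ j, ∑ k, ‖(r • P) j * L (EuclideanSpace.single k 1) -
      (r • P) k * L (EuclideanSpace.single j 1)‖ₑ := by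
  have hL : ∀ z : Spc n, L z = ∑ k, z k * L (EuclideanSpace.single k 1) := by
    intro z
    conv_lhs => rw [← (EuclideanSpace.basisFun (Fin n) ℝ).sum_repr z]
    simp [map_sum]
  have h1 : ∑ j, P j * P j = 1 := by
    have := EuclideanSpace.real_norm_sq_eq P
    rw [hP] at this
    simp_rw [← pow_two]
    linarith
  have h2 : ∑ k, P k * τ k = 0 := by
    rw [PiLp.inner_apply] at hPτ
    simpa [mul_comm] using hPτ
  have key : L (r • τ) = ∑ j, ∑ k, (P j * τ k) * ((r • P) j * L (EuclideanSpace.single k 1) -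
      (r • P) k * L (EuclideanSpace.single j 1)) := by
    have : ∀ j k, (P j * τ k) * ((r • P) j * L (EuclideanSpace.single k 1) -
      (r • P) k * L (EuclideanSpace.single j 1)) =
        r * ((P j * P j) * (τ k * L (EuclideanSpace.single k 1)) -
          (P j * L (EuclideanSpace.single j 1)) * (P k * τ k)) := by
      intro j k
      simp only [PiLp.smul_apply, smul_eq_mul]
      ring
    simp_rw [this, ← Finset.mul_sum, Finset.sum_sub_distrib, ← Finset.sum_mul_sum, ← hL, h1, h2]
    simp
  rw [key]
  refine (enorm_sum_le _ _).trans (Finset.sum_le_sum fun j _ => ?_)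
  refine (enorm_sum_le _ _).trans (Finset.sum_le_sum fun k _ => ?_)
  rw [enorm_mul]
  refine mul_le_of_le_one_left zero_le ?_
  have hj : ‖P j‖ ≤ 1 := (PiLp.norm_apply_le P j).trans hP.le
  have hk : ‖τ k‖ ≤ 1 := (PiLp.norm_apply_le τ k).trans hτ
  rw [← ofReal_norm, ENNReal.ofReal_le_one, norm_mul]
  exact mul_le_one₀ hj (norm_nonneg _) hk

/-- The linear part of the affine map `faceE i`. -/
noncomputable def faceL {d : ℕ} (i : Fin (d + 1)) : (Fin d → ℝ) →L[ℝ] Spc (d + 1) :=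
  ∑ k, (ContinuousLinearMap.proj (R := ℝ) (φ := fun _ : Fin d => ℝ) k).smulRight
    (EuclideanSpace.single (i.succAbove k) (1 : ℝ))

lemma faceE_eq {d : ℕ} (i : Fin (d + 1)) (y : Fin d → ℝ) :
    faceE i y = EuclideanSpace.single i 1 + faceL i y := by
  ext j
  refine Fin.succAboveCases i ?_ (fun k => ?_) j
  · simp [faceE, faceL, (Fin.succAbove_ne _ _).symm]
  · simp [faceE, faceL, Fin.succAbove_ne, Pi.single_apply, Finset.sum_apply]

lemma faceL_single {d : ℕ} (i : Fin (d + 1)) (j : Fin d) :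
    faceL i (Pi.single j 1) = EuclideanSpace.single (i.succAbove j) 1 := by
  simp [faceL, Pi.single_apply]

lemma contDiff_faceE {d : ℕ} (i : Fin (d + 1)) : ContDiff ℝ 1 (faceE i) := by
  have : faceE i = fun y => EuclideanSpace.single i 1 + faceL i y := funext (faceE_eq i)
  rw [this]
  fun_prop

lemma contDiff_norm_faceE {d : ℕ} (i : Fin (d + 1)) : ContDiff ℝ 1 (fun y => ‖faceE i y‖) :=
  (contDiff_faceE i).norm ℝ (faceE_ne_zero i)

lemma contDiff_faceP {d : ℕ} (i : Fin (d + 1)) : ContDiff ℝ 1 (faceP i) := by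
  unfold faceP
  exact ((contDiff_norm_faceE i).inv fun y => norm_ne_zero_iff.2 (faceE_ne_zero i y)).smul
    (contDiff_faceE i)

lemma inner_faceP_fderiv {d : ℕ} (i : Fin (d + 1)) (y z : Fin d → ℝ) :
    inner ℝ (faceP i y) (fderiv ℝ (faceP i) y z) = 0 := by
  have hP := ((contDiff_faceP i).differentiable one_ne_zero y).hasFDerivAt
  have h1 := hP.inner ℝ hP
  have h2 : (fun t => inner ℝ (faceP i t) (faceP i t)) = fun _ => (1 : ℝ) := by
    funext t
    rw [real_inner_self_eq_norm_sq, norm_faceP]; norm_num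
  rw [h2] at h1
  have h3 := congrArg (fun A => A z) (h1.unique (hasFDerivAt_const (1 : ℝ) y))
  simp [fderivInnerCLM_apply] at h3
  rw [real_inner_comm (faceP i y)] at h3
  linarith

/-- Differentiate `‖E‖ P = E` and take the inner product with the derivative `τ` of `P`,
which is orthogonal to `P`: this gives `‖E‖ |τ|² = ⟨e, τ⟩ ≤ |τ|` for a coordinate vector `e`, and
`‖E‖ ≥ 1`. -/
lemma norm_fderiv_faceP_le {d : ℕ} (i : Fin (d + 1)) (y : Fin d → ℝ) (j : Fin d) :
    ‖fderiv ℝ (faceP i) y (Pi.single j 1)‖ ≤ 1 := by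
  have hP := ((contDiff_faceP i).differentiable one_ne_zero y).hasFDerivAt
  have hN := ((contDiff_norm_faceE i).differentiable one_ne_zero y).hasFDerivAt
  have h1 := hN.smul hP
  have h2 : ((fun y => ‖faceE i y‖) • faceP i) = fun y => EuclideanSpace.single i 1 + faceL i y := by
    funext t
    rw [← faceE_eq]
    simp only [faceP, Pi.smul_apply', smul_smul]
    rw [mul_inv_cancel₀ (norm_ne_zero_iff.2 (faceE_ne_zero i t)), one_smul]
  rw [h2] at h1
  have h3 := congrArg (fun A => A (Pi.single j 1))
    (h1.unique ((faceL i).hasFDerivAt.const_add (EuclideanSpace.single i (1 : ℝ))))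
  simp only [add_apply, smul_apply,
    ContinuousLinearMap.smulRight_apply, faceL_single] at h3
  set τ := fderiv ℝ (faceP i) y (Pi.single j 1) with hτ
  have h4 := congrArg (fun z => inner ℝ z τ) h3
  simp only [inner_add_left, real_inner_smul_left, hτ ▸ inner_faceP_fderiv i y (Pi.single j 1),
    real_inner_self_eq_norm_sq] at h4
  have h5 := real_inner_le_norm (EuclideanSpace.single (i.succAbove j) (1 : ℝ)) τ
  have h6 : ‖(EuclideanSpace.single (i.succAbove j) (1 : ℝ) : Spc (d + 1))‖ = 1 := by simp
  rw [h6] at h5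
  have h7 := one_le_norm_faceE i y
  by_contra hlt
  push Not at hlt
  nlinarith [mul_pos (sub_pos.2 hlt) (by linarith : 0 < ‖τ‖), sq_nonneg ‖τ‖]

/-- The embedding `W^{1,1}(S^d) ⊂ L²(S^d)` for `d = 1, 2`, with the derivatives measured by the
rotation fields, uniformly over spheres of all radii. -/
lemma sphere_sobolev {d : ℕ} (hd : d = 1 ∨ d = 2) : ∃ C : ℝ≥0∞, C ≠ ⊤ ∧
    ∀ w : Spc (d + 1) → ℝ, ContDiff ℝ 1 w → ∀ r : ℝ,
      ∫⁻ o, ‖w (r • (o : Spc (d + 1)))‖ₑ ^ 2 ∂(sphM (d + 1)) ≤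
        C * (∫⁻ o, (‖w (r • (o : Spc (d + 1)))‖ₑ + rotSum w (r • (o : Spc (d + 1))))
          ∂(sphM (d + 1))) ^ 2 := by
  obtain ⟨C₁, hC₁, h₁⟩ := sphere_le_faces d
  obtain ⟨C₂, hC₂, h₂⟩ := face_le_sphere d
  refine ⟨C₁ * ∑ i : Fin (d + 1), (2 * C₂ ^ 2 + 2 * C₂ ^ 2), ?_, fun w hw r => ?_⟩
  · refine ENNReal.mul_ne_top hC₁ ?_
    refine ENNReal.sum_ne_top.2 fun i _ => ?_
    have : 2 * C₂ ^ 2 ≠ ⊤ := ENNReal.mul_ne_top ENNReal.ofNat_ne_top (ENNReal.pow_ne_top hC₂)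
    exact ENNReal.add_ne_top.2 ⟨this, this⟩
  have hdw := hw.differentiable one_ne_zero
  have hmR := measurable_rotSum hw
  have hmw := hw.continuous.measurable
  set J := ∫⁻ o, (‖w (r • (o : Spc (d + 1)))‖ₑ + rotSum w (r • (o : Spc (d + 1))))
          ∂(sphM (d + 1)) with hJ
  have key : ∀ (i : Fin (d + 1)) (σ : ℝ), (σ = 1 ∨ σ = -1) →
      ∫⁻ y in cubeQ d, ‖w (r • σ • faceP i y)‖ₑ ^ 2 ≤ 2 * C₂ ^ 2 * J ^ 2 := by
    intro i σ hσ
    set u : (Fin d → ℝ) → ℝ := fun y => w ((r * σ) • faceP i y) with hu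
    have hcP := contDiff_faceP i
    have hcu : ContDiff ℝ 1 u := hw.comp (hcP.const_smul (r * σ))
    have hsm : Continuous fun y => (r * σ) • faceP i y := by
      have := continuous_faceP i
      fun_prop
    have hgm : Measurable fun y => rotSum w ((r * σ) • faceP i y) :=
      hmR.comp hsm.measurable
    have hder : ∀ y j, ‖fderiv ℝ u y (Pi.single j 1)‖ₑ ≤ rotSum w ((r * σ) • faceP i y) := by
      intro y j
      have hP := (hcP.differentiable one_ne_zero y).hasFDerivAt
      have hf := (hdw ((r * σ) • faceP i y)).hasFDerivAt.comp y (hP.const_smul (r * σ))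
      have : fderiv ℝ u y = _ := hf.fderiv
      rw [this]
      exact enorm_tangential_le _ (norm_faceP i y) (norm_fderiv_faceP_le i y j)
        (inner_faceP_fderiv i y _) (r * σ)
    have h3 := cube_sobolev hd hcu hgm hder
    have h4 := h₂ (fun x => ‖w (r • x)‖ₑ + rotSum w (r • x)) (by fun_prop) i σ hσ
    simp only [hu, ← smul_smul] at h3
    refine h3.trans ?_
    calc _ ≤ 2 * (C₂ * J) ^ 2 := by gcongr
      _ = _ := by ring
  refine (h₁ (fun x => ‖w (r • x)‖ₑ ^ 2) (by fun_prop)).trans ?_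
  rw [mul_assoc, Finset.sum_mul]
  gcongr with i
  rw [lintegral_add_left, add_mul]
  · refine add_le_add ?_ ?_
    · simpa using key i 1 (Or.inl rfl)
    · simpa using key i (-1) (Or.inr rfl)
  · have := continuous_faceP i
    fun_prop

/-! ### The radial bound and the estimate on a single sphere -/

/-- The Cauchy–Schwarz inequality for lower Lebesgue integrals. -/
lemma lintegral_mul_le_sqrt {α : Type*} [MeasurableSpace α] (μ : Measure α) {f g : α → ℝ≥0∞}
    (hf : AEMeasurable f μ) (hg : AEMeasurable g μ) :
    ∫⁻ a, f a * g a ∂μ ≤ (∫⁻ a, f a ^ 2 ∂μ) ^ (1 / 2 : ℝ) * (∫⁻ a, g a ^ 2 ∂μ) ^ (1 / 2 : ℝ) := by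
  have := ENNReal.lintegral_mul_le_Lp_mul_Lq μ Real.HolderConjugate.two_two hf hg
  simpa [ENNReal.rpow_two] using this

lemma sq_rpow_half (a : ℝ≥0∞) : (a ^ 2) ^ (1 / 2 : ℝ) = a := by
  rw [← ENNReal.rpow_two, ← ENNReal.rpow_mul]; norm_num

lemma rpow_half_sq (a : ℝ≥0∞) : (a ^ (1 / 2 : ℝ)) ^ 2 = a := by
  rw [← ENNReal.rpow_two, ← ENNReal.rpow_mul]; norm_num

/-- Radial fundamental theorem of calculus for `v⁴`, integrating inwards from infinity. -/
lemma pow_four_le_radial {n : ℕ} {v : Spc n → ℝ} (hv : ContDiff ℝ 1 v) (hs : HasCompactSupport v)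
    (r : ℝ) {o : Spc n} (ho : ‖o‖ = 1) :
    ‖v (r • o)‖ₑ ^ 4 ≤
      ∫⁻ ρ in Set.Ioi r, 4 * (‖v (ρ • o)‖ₑ ^ 3 * ‖fderiv ℝ v (ρ • o)‖ₑ) := by
  have hdv := hv.differentiable one_ne_zero
  have hcf : Continuous (fderiv ℝ v) := hv.continuous_fderiv one_ne_zero
  have hcv := hv.continuous
  obtain ⟨R, hR⟩ := hs.isCompact.isBounded.exists_norm_le
  set b := max r (R + 1) with hb
  have hvb : v (b • o) = 0 := by
    refine image_eq_zero_of_notMem_tsupport fun hmem => ?_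
    have h1 := hR _ hmem
    rw [norm_smul, ho, mul_one] at h1
    have h2 := le_max_right r (R + 1)
    have h3 := Real.le_norm_self b
    linarith
  have hder : ∀ s : ℝ, HasDerivAt (fun s : ℝ => v (s • o) ^ 4)
      (4 * v (s • o) ^ 3 * fderiv ℝ v (s • o) o) s := by
    intro s
    have h1 : HasDerivAt (fun s : ℝ => s • o) o s := by
      simpa using (hasDerivAt_id s).smul_const o
    have h2 := ((hdv (s • o)).hasFDerivAt.comp_hasDerivAt s h1).pow 4
    simpa [Function.comp_def, Pi.pow_def] using h2
  have h := enorm_sub_le_lintegral_deriv hder (by fun_prop) (le_max_left r (R + 1))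
  rw [← hb, hvb, zero_pow four_ne_zero, zero_sub, enorm_neg, enorm_pow] at h
  refine h.trans ((lintegral_mono_set Set.Ioc_subset_Ioi_self).trans ?_)
  refine lintegral_mono fun ρ => ?_
  rw [mul_assoc, enorm_mul, enorm_mul, enorm_pow]
  have h4 : ‖(4 : ℝ)‖ₑ = 4 := by
    rw [Real.enorm_of_nonneg (by norm_num)]; norm_num
  rw [h4]
  gcongr
  have := (fderiv ℝ v (ρ • o)).le_opNorm o
  rw [ho, mul_one] at this
  rw [← ofReal_norm, ← ofReal_norm]
  exact ENNReal.ofReal_le_ofReal this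

lemma rotSum_cube {n : ℕ} {v : Spc n → ℝ} (hv : ContDiff ℝ 1 v) (x : Spc n) :
    rotSum (fun x => v x ^ 3) x = 3 * (‖v x‖ₑ ^ 2 * rotSum v x) := by
  have h1 : fderiv ℝ (fun x => v x ^ 3) x = (3 * v x ^ 2) • fderiv ℝ v x := by
    have := ((hv.differentiable one_ne_zero x).hasFDerivAt.pow 3).fderiv
    simpa using this
  have h3 : ‖(3 : ℝ)‖ₑ = 3 := by
    rw [Real.enorm_of_nonneg (by norm_num)]; norm_num
  unfold rotSum
  simp_rw [Finset.mul_sum]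
  refine Finset.sum_congr rfl fun j _ => Finset.sum_congr rfl fun k _ => ?_
  rw [h1]
  simp only [smul_apply, smul_eq_mul]
  rw [← enorm_pow, ← h3, ← enorm_mul, ← enorm_mul]
  congr 1
  ring

instance (n : ℕ) : IsFiniteMeasure (sphM n) := by unfold sphM; infer_instance

/-- `∫_S v⁴` at radius `r`. -/
noncomputable def sphF {d : ℕ} (v : Spc (d + 1) → ℝ) (r : ℝ) : ℝ≥0∞ :=
  ∫⁻ o, ‖v (r • (o : Spc (d + 1)))‖ₑ ^ 4 ∂(sphM (d + 1))

/-- The estimate on a single sphere: Cauchy–Schwarz, the Sobolev embedding applied to `v³`, and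
Cauchy–Schwarz again. -/
lemma sphere_cubic {d : ℕ} {C : ℝ≥0∞}
    (hC : ∀ w : Spc (d + 1) → ℝ, ContDiff ℝ 1 w → ∀ r : ℝ,
      ∫⁻ o, ‖w (r • (o : Spc (d + 1)))‖ₑ ^ 2 ∂(sphM (d + 1)) ≤
        C * (∫⁻ o, (‖w (r • (o : Spc (d + 1)))‖ₑ + rotSum w (r • (o : Spc (d + 1))))
          ∂(sphM (d + 1))) ^ 2)
    {v : Spc (d + 1) → ℝ} (hv : ContDiff ℝ 1 v) (r : ℝ) :
    ∫⁻ o, ‖v (r • (o : Spc (d + 1)))‖ₑ ^ 3 * ‖fderiv ℝ v (r • (o : Spc (d + 1)))‖ₑ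
        ∂(sphM (d + 1)) ≤
      3 * C ^ (1 / 2 : ℝ) * sphF v r ^ (1 / 2 : ℝ) *
        ((∫⁻ o, ‖fderiv ℝ v (r • (o : Spc (d + 1)))‖ₑ ^ 2 ∂(sphM (d + 1))) ^ (1 / 2 : ℝ) *
        (∫⁻ o, (‖v (r • (o : Spc (d + 1)))‖ₑ + rotSum v (r • (o : Spc (d + 1)))) ^ 2
          ∂(sphM (d + 1))) ^ (1 / 2 : ℝ)) := by
  have hcf : Continuous (fderiv ℝ v) := hv.continuous_fderiv one_ne_zero
  have hcv := hv.continuous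
  have hmv := hcv.measurable
  have hmR := measurable_rotSum hv
  have hs : Measurable fun o : Metric.sphere (0 : Spc (d + 1)) 1 => r • (o : Spc (d + 1)) := by
    fun_prop
  have hmR' : Measurable fun o : Metric.sphere (0 : Spc (d + 1)) 1 =>
      rotSum v (r • (o : Spc (d + 1))) := hmR.comp hs
  have hsob : ∫⁻ o, (‖v (r • (o : Spc (d + 1)))‖ₑ ^ 3) ^ 2 ∂(sphM (d + 1)) ≤
      C * (3 * ∫⁻ o, ‖v (r • (o : Spc (d + 1)))‖ₑ ^ 2 *
        (‖v (r • (o : Spc (d + 1)))‖ₑ + rotSum v (r • (o : Spc (d + 1)))) ∂(sphM (d + 1))) ^ 2 := by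
    have h1 := hC (fun x => v x ^ 3) (hv.pow 3) r
    simp only [enorm_pow, rotSum_cube hv] at h1
    refine h1.trans ?_
    gcongr
    rw [← lintegral_const_mul _ (by fun_prop)]
    refine lintegral_mono fun o => ?_
    set a := ‖v (r • (o : Spc (d + 1)))‖ₑ
    set b := rotSum v (r • (o : Spc (d + 1)))
    calc a ^ 3 + 3 * (a ^ 2 * b) = a ^ 2 * a + 3 * (a ^ 2 * b) := by ring
      _ ≤ 3 * (a ^ 2 * a) + 3 * (a ^ 2 * b) := by
        exact add_le_add (le_mul_of_one_le_left zero_le (by norm_num : (1 : ℝ≥0∞) ≤ 3)) le_rfl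
      _ = _ := by ring
  have hcs : ∫⁻ o, ‖v (r • (o : Spc (d + 1)))‖ₑ ^ 2 *
        (‖v (r • (o : Spc (d + 1)))‖ₑ + rotSum v (r • (o : Spc (d + 1)))) ∂(sphM (d + 1)) ≤
      sphF v r ^ (1 / 2 : ℝ) * (∫⁻ o, (‖v (r • (o : Spc (d + 1)))‖ₑ +
        rotSum v (r • (o : Spc (d + 1)))) ^ 2 ∂(sphM (d + 1))) ^ (1 / 2 : ℝ) := by
    refine (lintegral_mul_le_sqrt _ (by fun_prop) (by fun_prop)).trans (le_of_eq ?_)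
    simp only [sphF, ← pow_mul]
  refine (lintegral_mul_le_sqrt _ (by fun_prop) (by fun_prop)).trans ?_
  set A := (∫⁻ o, ‖fderiv ℝ v (r • (o : Spc (d + 1)))‖ₑ ^ 2 ∂(sphM (d + 1))) ^ (1 / 2 : ℝ)
  set B := (∫⁻ o, (‖v (r • (o : Spc (d + 1)))‖ₑ + rotSum v (r • (o : Spc (d + 1)))) ^ 2
          ∂(sphM (d + 1))) ^ (1 / 2 : ℝ)
  calc _ ≤ (C * (3 * (sphF v r ^ (1 / 2 : ℝ) * B)) ^ 2) ^ (1 / 2 : ℝ) * A := by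
        gcongr
        exact hsob.trans (by gcongr)
    _ = C ^ (1 / 2 : ℝ) * (3 * (sphF v r ^ (1 / 2 : ℝ) * B)) * A := by
        rw [ENNReal.mul_rpow_of_nonneg _ _ (by norm_num), sq_rpow_half]
    _ = _ := by ring

/-! ### Integration over the radii and absorption of the supremum -/

/-- The supremum over all radii `ρ` of `ρ^d (∫_S v(ρω)⁴ dω)^{1/2}`. -/
noncomputable def sphSup {d : ℕ} (v : Spc (d + 1) → ℝ) : ℝ≥0∞ :=
  ⨆ ρ : Set.Ioi (0 : ℝ), ENNReal.ofReal (ρ.1 ^ d) * sphF v ρ.1 ^ (1 / 2 : ℝ)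

/-- `X_ρ` vanishes for large `ρ` and is bounded for the remaining radii. -/
lemma sphSup_ne_top {d : ℕ} {v : Spc (d + 1) → ℝ} (hv : Continuous v)
    (hs : HasCompactSupport v) : sphSup v ≠ ⊤ := by
  obtain ⟨R, hR⟩ := hs.isCompact.isBounded.exists_norm_le
  obtain ⟨B, hB⟩ := hs.exists_bound_of_continuous hv
  have hF : ∀ ρ : ℝ, sphF v ρ ≤ ENNReal.ofReal B ^ 4 * sphM (d + 1) Set.univ := by
    intro ρ
    rw [← lintegral_const]
    refine lintegral_mono fun o => ?_
    gcongr
    rw [← ofReal_norm]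
    exact ENNReal.ofReal_le_ofReal (hB _)
  refine ne_top_of_le_ne_top (b := ENNReal.ofReal (|R| ^ d) *
    (ENNReal.ofReal B ^ 4 * sphM (d + 1) Set.univ) ^ (1 / 2 : ℝ)) ?_ ?_
  · refine ENNReal.mul_ne_top ENNReal.ofReal_ne_top
      (ENNReal.rpow_ne_top_of_nonneg (by norm_num) ?_)
    exact ENNReal.mul_ne_top (ENNReal.pow_ne_top ENNReal.ofReal_ne_top) (measure_ne_top _ _)
  · refine iSup_le fun ⟨ρ, hρ⟩ => ?_
    have hρ : 0 < ρ := hρ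
    by_cases h : ρ ≤ |R|
    · simp only
      gcongr
      exact hF ρ
    · have hz : sphF v ρ = 0 := by
        have : ∀ o : Metric.sphere (0 : Spc (d + 1)) 1, v (ρ • (o : Spc (d + 1))) = 0 := by
          intro o
          refine image_eq_zero_of_notMem_tsupport fun hmem => h ?_
          have h1 := hR _ hmem
          rw [norm_smul, norm_eq_of_mem_sphere o, mul_one, Real.norm_of_nonneg hρ.le] at h1
          exact h1.trans (le_abs_self R)
        simp [sphF, this]
      simp [hz]

/-- The quadratic self-improving bound: `X_r² ≤ A sup_ρ X_ρ` for
`X_r = r^d (∫_S v(rω)⁴ dω)^{1/2}`. -/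
lemma sphere_quadratic {d : ℕ} {C : ℝ≥0∞}
    (hC : ∀ w : Spc (d + 1) → ℝ, ContDiff ℝ 1 w → ∀ r : ℝ,
      ∫⁻ o, ‖w (r • (o : Spc (d + 1)))‖ₑ ^ 2 ∂(sphM (d + 1)) ≤
        C * (∫⁻ o, (‖w (r • (o : Spc (d + 1)))‖ₑ + rotSum w (r • (o : Spc (d + 1))))
          ∂(sphM (d + 1))) ^ 2)
    {v : Spc (d + 1) → ℝ} (hv : ContDiff ℝ 1 v) (hs : HasCompactSupport v) {r : ℝ} (hr : 0 < r) :
    (ENNReal.ofReal (r ^ d) * sphF v r ^ (1 / 2 : ℝ)) ^ 2 ≤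
      12 * C ^ (1 / 2 : ℝ) * ((∫⁻ x, ‖fderiv ℝ v x‖ₑ ^ 2) ^ (1 / 2 : ℝ) *
        (∫⁻ x, (‖v x‖ₑ + rotSum v x) ^ 2) ^ (1 / 2 : ℝ)) * sphSup v := by
  have hcf : Continuous (fderiv ℝ v) := hv.continuous_fderiv one_ne_zero
  have hcv := hv.continuous
  have hmv := hcv.measurable
  have hmf := hcf.measurable
  have hmR := measurable_rotSum hv
  set g : ℝ → ℝ≥0∞ := fun ρ => ∫⁻ o, ‖fderiv ℝ v (ρ • (o : Spc (d + 1)))‖ₑ ^ 2 ∂(sphM (d + 1))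
    with hg
  set h : ℝ → ℝ≥0∞ := fun ρ => ∫⁻ o, (‖v (ρ • (o : Spc (d + 1)))‖ₑ +
    rotSum v (ρ • (o : Spc (d + 1)))) ^ 2 ∂(sphM (d + 1)) with hh
  have hsm : Measurable fun p : ℝ × Metric.sphere (0 : Spc (d + 1)) 1 =>
      p.1 • (p.2 : Spc (d + 1)) := by fun_prop
  have hgm : Measurable g := by
    apply Measurable.lintegral_prod_right
      (f := fun (r : ℝ) (o : Metric.sphere (0 : Spc (d + 1)) 1) =>
        ‖fderiv ℝ v (r • (o : Spc (d + 1)))‖ₑ ^ 2)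
    exact (by fun_prop : Measurable fun x => ‖fderiv ℝ v x‖ₑ ^ 2).comp hsm
  have hhm : Measurable h := by
    apply Measurable.lintegral_prod_right
      (f := fun (r : ℝ) (o : Metric.sphere (0 : Spc (d + 1)) 1) =>
        (‖v (r • (o : Spc (d + 1)))‖ₑ + rotSum v (r • (o : Spc (d + 1)))) ^ 2)
    exact (by fun_prop : Measurable fun x => (‖v x‖ₑ + rotSum v x) ^ 2).comp hsm
  -- Integrate the radial bound over the sphere and exchange the order of integration.
  have h1 : sphF v r ≤ ∫⁻ ρ in Set.Ioi r, 4 * (3 * C ^ (1 / 2 : ℝ) * sphF v ρ ^ (1 / 2 : ℝ) *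
      (g ρ ^ (1 / 2 : ℝ) * h ρ ^ (1 / 2 : ℝ))) := by
    calc sphF v r ≤ ∫⁻ o, (∫⁻ ρ in Set.Ioi r, 4 * (‖v (ρ • (o : Spc (d + 1)))‖ₑ ^ 3 *
          ‖fderiv ℝ v (ρ • (o : Spc (d + 1)))‖ₑ)) ∂(sphM (d + 1)) :=
          lintegral_mono fun o => pow_four_le_radial hv hs r (norm_eq_of_mem_sphere o)
      _ = ∫⁻ ρ in Set.Ioi r, ∫⁻ o, 4 * (‖v (ρ • (o : Spc (d + 1)))‖ₑ ^ 3 *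
          ‖fderiv ℝ v (ρ • (o : Spc (d + 1)))‖ₑ) ∂(sphM (d + 1)) := by
          apply lintegral_lintegral_swap
          exact ((by fun_prop : Measurable fun x => 4 * (‖v x‖ₑ ^ 3 * ‖fderiv ℝ v x‖ₑ)).comp
            (hsm.comp measurable_swap)).aemeasurable
      _ ≤ _ := by
          refine lintegral_mono fun ρ => ?_
          rw [lintegral_const_mul' _ _ (by norm_num)]
          gcongr
          exact sphere_cubic hC hv ρ
  have h2 : (ENNReal.ofReal (r ^ d) * sphF v r ^ (1 / 2 : ℝ)) ^ 2 ≤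
      ∫⁻ ρ in Set.Ioi r, 12 * C ^ (1 / 2 : ℝ) * sphSup v *
        ((ENNReal.ofReal (ρ ^ d) * g ρ) ^ (1 / 2 : ℝ) *
          (ENNReal.ofReal (ρ ^ d) * h ρ) ^ (1 / 2 : ℝ)) := by
    rw [mul_pow, rpow_half_sq]
    refine (mul_le_mul' le_rfl h1).trans ?_
    rw [← lintegral_const_mul' _ _ (ENNReal.pow_ne_top ENNReal.ofReal_ne_top)]
    refine setLIntegral_mono' measurableSet_Ioi fun ρ hρ => ?_
    have hρ : r < ρ := hρ
    have hle : ENNReal.ofReal (r ^ d) ≤ ENNReal.ofReal (ρ ^ d) :=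
      ENNReal.ofReal_le_ofReal (by gcongr)
    have hsup : ENNReal.ofReal (ρ ^ d) * sphF v ρ ^ (1 / 2 : ℝ) ≤ sphSup v :=
      le_iSup (fun ρ : Set.Ioi (0 : ℝ) => ENNReal.ofReal (ρ.1 ^ d) * sphF v ρ.1 ^ (1 / 2 : ℝ))
        ⟨ρ, hr.trans hρ⟩
    rw [ENNReal.mul_rpow_of_nonneg _ _ (by norm_num : (0 : ℝ) ≤ 1 / 2),
      ENNReal.mul_rpow_of_nonneg _ _ (by norm_num : (0 : ℝ) ≤ 1 / 2)]
    set a := ENNReal.ofReal (ρ ^ d)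
    calc _ ≤ a ^ 2 * (4 * (3 * C ^ (1 / 2 : ℝ) * sphF v ρ ^ (1 / 2 : ℝ) *
          (g ρ ^ (1 / 2 : ℝ) * h ρ ^ (1 / 2 : ℝ)))) := by gcongr
      _ = 12 * C ^ (1 / 2 : ℝ) * (a * sphF v ρ ^ (1 / 2 : ℝ)) *
          (a * (g ρ ^ (1 / 2 : ℝ) * h ρ ^ (1 / 2 : ℝ))) := by ring
      _ ≤ 12 * C ^ (1 / 2 : ℝ) * sphSup v *
          (a * (g ρ ^ (1 / 2 : ℝ) * h ρ ^ (1 / 2 : ℝ))) := by gcongr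
      _ = 12 * C ^ (1 / 2 : ℝ) * sphSup v *
          ((a ^ (1 / 2 : ℝ)) ^ 2 * (g ρ ^ (1 / 2 : ℝ) * h ρ ^ (1 / 2 : ℝ))) := by
            rw [rpow_half_sq]
      _ = _ := by ring
  refine h2.trans ?_
  rw [lintegral_const_mul _ (by fun_prop)]
  have h3 : ∫⁻ ρ in Set.Ioi r, (ENNReal.ofReal (ρ ^ d) * g ρ) ^ (1 / 2 : ℝ) *
          (ENNReal.ofReal (ρ ^ d) * h ρ) ^ (1 / 2 : ℝ) ≤
      (∫⁻ x, ‖fderiv ℝ v x‖ₑ ^ 2) ^ (1 / 2 : ℝ) *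
        (∫⁻ x, (‖v x‖ₑ + rotSum v x) ^ 2) ^ (1 / 2 : ℝ) := by
    refine (lintegral_mono_set (Set.Ioi_subset_Ioi hr.le)).trans ?_
    refine (lintegral_mul_le_sqrt _ (by fun_prop) (by fun_prop)).trans (le_of_eq ?_)
    simp only [rpow_half_sq]
    rw [lintegral_polar (f := fun x => ‖fderiv ℝ v x‖ₑ ^ 2) (by fun_prop),
      lintegral_polar (f := fun x => (‖v x‖ₑ + rotSum v x) ^ 2) (by fun_prop)]
  calc _ ≤ 12 * C ^ (1 / 2 : ℝ) * sphSup v * ((∫⁻ x, ‖fderiv ℝ v x‖ₑ ^ 2) ^ (1 / 2 : ℝ) *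
        (∫⁻ x, (‖v x‖ₑ + rotSum v x) ^ 2) ^ (1 / 2 : ℝ)) := by gcongr
    _ = _ := by ring

lemma lintegral_sq_eq_eLpNorm {α ε : Type*} [MeasurableSpace α] [ENorm ε] (μ : Measure α)
    (f : α → ε) : (∫⁻ x, ‖f x‖ₑ ^ 2 ∂μ) ^ (1 / 2 : ℝ) = eLpNorm f 2 μ := by
  rw [eLpNorm_eq_lintegral_rpow_enorm_toReal (by norm_num) (by norm_num)]
  simp

/-- The Minkowski inequality. The factor `2` appears because `rotSum` runs over all ordered pairs
`(j, k)`, each unordered pair being counted twice. -/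
lemma eLpNorm_add_rotSum_le {n : ℕ} {v : Spc n → ℝ} (hv : ContDiff ℝ 1 v) :
    (∫⁻ x, (‖v x‖ₑ + rotSum v x) ^ 2) ^ (1 / 2 : ℝ) ≤
      2 * (eLpNorm v 2 volume + ∑ j : Fin n, ∑ k : Fin n,
              if j < k then
                eLpNorm (fun x : Spc n =>
                  x j * fderiv ℝ v x (EuclideanSpace.single k 1) -
                    x k * fderiv ℝ v x (EuclideanSpace.single j 1)) 2 volume
              else 0) := by
  have hcf : Continuous (fderiv ℝ v) := hv.continuous_fderiv one_ne_zero
  have hcv := hv.continuous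
  set Ω : Fin n → Fin n → Spc n → ℝ := fun j k x =>
    x j * fderiv ℝ v x (EuclideanSpace.single k 1) -
      x k * fderiv ℝ v x (EuclideanSpace.single j 1) with hΩ
  have hΩc : ∀ j k, Continuous (Ω j k) := fun j k => by fun_prop
  have hH : ∀ x, (‖v x‖ₑ + rotSum v x) = ‖‖v x‖ + ∑ j, ∑ k, ‖Ω j k x‖‖ₑ := by
    intro x
    have hnn : 0 ≤ ∑ j, ∑ k, ‖Ω j k x‖ :=
      Finset.sum_nonneg fun _ _ => Finset.sum_nonneg fun _ _ => norm_nonneg _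
    rw [Real.enorm_of_nonneg (add_nonneg (norm_nonneg _) hnn),
      ENNReal.ofReal_add (norm_nonneg _) hnn,
      ofReal_norm, ENNReal.ofReal_sum_of_nonneg (fun _ _ => by positivity)]
    congr 1
    refine Finset.sum_congr rfl fun j _ => ?_
    rw [ENNReal.ofReal_sum_of_nonneg (fun _ _ => by positivity)]
    refine Finset.sum_congr rfl fun k _ => ?_
    rw [ofReal_norm]
  simp_rw [hH]
  rw [lintegral_sq_eq_eLpNorm]
  have hanti : ∀ j k, eLpNorm (Ω j k) 2 volume = eLpNorm (Ω k j) 2 volume := by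
    intro j k
    have : Ω k j = -Ω j k := by funext x; simp [hΩ]
    rw [this, eLpNorm_neg]
  have hdiag : ∀ j, eLpNorm (Ω j j) 2 volume = 0 := by
    intro j
    have : Ω j j = 0 := by funext x; simp [hΩ]
    rw [this, eLpNorm_zero]
  set S := ∑ j : Fin n, ∑ k : Fin n, if j < k then eLpNorm (Ω j k) 2 volume else 0 with hS
  have hsum : ∑ j, ∑ k, eLpNorm (Ω j k) 2 volume = 2 * S := by
    have h1 : ∀ j k, eLpNorm (Ω j k) 2 volume =
        (if j < k then eLpNorm (Ω j k) 2 volume else 0) +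
          (if k < j then eLpNorm (Ω k j) 2 volume else 0) := by
      intro j k
      rcases lt_trichotomy j k with h | h | h
      · simp [h, h.not_gt]
      · subst h; simp [hdiag]
      · simp [h, h.not_gt, hanti j k]
    have h2 : ∑ j : Fin n, ∑ k : Fin n, (if k < j then eLpNorm (Ω k j) 2 volume else 0) = S := by
      rw [Finset.sum_comm]
    calc _ = ∑ j, ∑ k, ((if j < k then eLpNorm (Ω j k) 2 volume else 0) +
          (if k < j then eLpNorm (Ω k j) 2 volume else 0)) :=
          Finset.sum_congr rfl fun j _ => Finset.sum_congr rfl fun k _ => h1 j k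
      _ = S + S := by simp_rw [Finset.sum_add_distrib]; rw [h2]
      _ = 2 * S := (two_mul S).symm
  calc eLpNorm (fun x => ‖v x‖ + ∑ j, ∑ k, ‖Ω j k x‖) 2 volume
      ≤ eLpNorm (fun x => ‖v x‖) 2 volume +
          eLpNorm (fun x => ∑ j, ∑ k, ‖Ω j k x‖) 2 volume := by
        refine eLpNorm_add_le ?_ ?_ (by norm_num)
        · exact Continuous.aestronglyMeasurable (by fun_prop)
        · exact Continuous.aestronglyMeasurable (by fun_prop)
    _ ≤ eLpNorm v 2 volume + ∑ j, ∑ k, eLpNorm (Ω j k) 2 volume := by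
        rw [eLpNorm_norm]
        gcongr
        have e1 : (fun x => ∑ j, ∑ k, ‖Ω j k x‖) = ∑ j, fun x => ∑ k, ‖Ω j k x‖ := by
          funext x; simp
        rw [e1]
        refine (eLpNorm_sum_le (fun j _ => Continuous.aestronglyMeasurable (by fun_prop))
          (by norm_num)).trans ?_
        gcongr with j
        have e2 : (fun x => ∑ k, ‖Ω j k x‖) = ∑ k, fun x => ‖Ω j k x‖ := by
          funext x; simp
        rw [e2]
        refine (eLpNorm_sum_le (fun k _ => Continuous.aestronglyMeasurable (by fun_prop))
          (by norm_num)).trans ?_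
        gcongr with k
        rw [eLpNorm_norm]
    _ ≤ 2 * (eLpNorm v 2 volume + S) := by
        rw [hsum, mul_add]
        gcongr
        exact le_mul_of_one_le_left zero_le (by norm_num : (1 : ℝ≥0∞) ≤ 2)

/-- Absorbing the supremum: a finite `M` with `X² ≤ A M` for all the values `X` it bounds
satisfies `M ≤ A`. -/
lemma sphSup_le {d : ℕ} {v : Spc (d + 1) → ℝ} {A : ℝ≥0∞} (hM : sphSup v ≠ ⊤)
    (h : ∀ r : ℝ, 0 < r → (ENNReal.ofReal (r ^ d) * sphF v r ^ (1 / 2 : ℝ)) ^ 2 ≤ A * sphSup v) :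
    sphSup v ≤ A := by
  by_cases h0 : sphSup v = 0
  · rw [h0]; exact zero_le
  have h1 : sphSup v ≤ (A * sphSup v) ^ (1 / 2 : ℝ) := by
    refine iSup_le fun ⟨ρ, hρ⟩ => ?_
    rw [← sq_rpow_half (ENNReal.ofReal (ρ ^ d) * sphF v ρ ^ (1 / 2 : ℝ))]
    exact ENNReal.rpow_le_rpow (h ρ hρ) (by norm_num)
  have h2 : sphSup v * sphSup v ≤ A * sphSup v := by
    rw [← pow_two]
    calc sphSup v ^ 2 ≤ ((A * sphSup v) ^ (1 / 2 : ℝ)) ^ 2 := by gcongr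
      _ = _ := rpow_half_sq _
  exact (ENNReal.mul_le_mul_iff_left h0 hM).1 h2

/-- The trace-type inequality with rotations (Lemma 3.4 (ii)). -/
theorem trace_inequality_rotations (n : ℕ) (hn : n = 2 ∨ n = 3) :
    ∃ C > (0 : ℝ), ∀ v : Spc n → ℝ, ContDiff ℝ ∞ v → HasCompactSupport v →
      ∀ r : ℝ, 0 < r →
        ENNReal.ofReal (r ^ (((n : ℝ) - 1)/2)) * sphN n 4 v r ≤
          ENNReal.ofReal C * (eLpNorm (fun x : Spc n => ‖fderiv ℝ v x‖) 2 volume) ^ (1/2 : ℝ) *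
            (eLpNorm v 2 volume + ∑ j : Fin n, ∑ k : Fin n,
              if j < k then
                eLpNorm (fun x : Spc n =>
                  x j * fderiv ℝ v x (EuclideanSpace.single k 1) -
                    x k * fderiv ℝ v x (EuclideanSpace.single j 1)) 2 volume
              else 0) ^ (1/2 : ℝ) := by
  obtain ⟨d, rfl, hd⟩ : ∃ d : ℕ, n = d + 1 ∧ (d = 1 ∨ d = 2) := by
    rcases hn with rfl | rfl
    · exact ⟨1, rfl, Or.inl rfl⟩
    · exact ⟨2, rfl, Or.inr rfl⟩
  obtain ⟨C₀, hC₀, hsob⟩ := sphere_sobolev hd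
  set K : ℝ≥0∞ := (24 * C₀ ^ (1 / 2 : ℝ)) ^ (1 / 2 : ℝ) with hK
  have hKt : K ≠ ⊤ := by
    refine ENNReal.rpow_ne_top_of_nonneg (by norm_num) (ENNReal.mul_ne_top ENNReal.ofNat_ne_top ?_)
    exact ENNReal.rpow_ne_top_of_nonneg (by norm_num) hC₀
  refine ⟨K.toReal + 1, by positivity, fun v hv hs r hr => ?_⟩
  have hv1 : ContDiff ℝ 1 v := hv.of_le (by exact_mod_cast le_top)
  have hM : sphSup v ≠ ⊤ := sphSup_ne_top hv1.continuous hs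
  have hbound := sphSup_le hM fun r hr => sphere_quadratic hsob hv1 hs hr
  have hrot := eLpNorm_add_rotSum_le hv1
  set T := eLpNorm v 2 volume + ∑ j : Fin (d + 1), ∑ k : Fin (d + 1),
              if j < k then
                eLpNorm (fun x : Spc (d + 1) =>
                  x j * fderiv ℝ v x (EuclideanSpace.single k 1) -
                    x k * fderiv ℝ v x (EuclideanSpace.single j 1)) 2 volume
              else 0 with hT
  rw [lintegral_sq_eq_eLpNorm, ← eLpNorm_norm] at hbound
  set D := eLpNorm (fun x : Spc (d + 1) => ‖fderiv ℝ v x‖) 2 volume with hD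
  have hlhs : ENNReal.ofReal (r ^ (((↑(d + 1) : ℝ) - 1) / 2)) * sphN (d + 1) 4 v r =
      (ENNReal.ofReal (r ^ d) * sphF v r ^ (1 / 2 : ℝ)) ^ (1 / 2 : ℝ) := by
    rw [ENNReal.mul_rpow_of_nonneg _ _ (by norm_num), ← ENNReal.rpow_mul,
      ENNReal.ofReal_rpow_of_nonneg (by positivity) (by norm_num), ← Real.rpow_natCast,
      ← Real.rpow_mul hr.le]
    congr 1
    · congr 2
      push_cast
      ring
    · rw [sphN, sphF]
      congr 1
      · refine lintegral_congr fun o => ?_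
        rw [show (4 : ℝ) = ((4 : ℕ) : ℝ) by norm_num, ENNReal.rpow_natCast]
        rfl
      · norm_num
  rw [hlhs]
  calc (ENNReal.ofReal (r ^ d) * sphF v r ^ (1 / 2 : ℝ)) ^ (1 / 2 : ℝ)
      ≤ (24 * C₀ ^ (1 / 2 : ℝ) * D * T) ^ (1 / 2 : ℝ) := by
        refine ENNReal.rpow_le_rpow ?_ (by norm_num)
        refine (le_iSup (fun ρ : Set.Ioi (0 : ℝ) =>
          ENNReal.ofReal (ρ.1 ^ d) * sphF v ρ.1 ^ (1 / 2 : ℝ)) ⟨r, hr⟩).trans ?_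
        refine hbound.trans ?_
        calc _ ≤ 12 * C₀ ^ (1 / 2 : ℝ) * (D * (2 * T)) := by gcongr
          _ = _ := by ring
    _ = K * D ^ (1 / 2 : ℝ) * T ^ (1 / 2 : ℝ) := by
        rw [ENNReal.mul_rpow_of_nonneg _ _ (by norm_num),
          ENNReal.mul_rpow_of_nonneg _ _ (by norm_num)]
    _ ≤ ENNReal.ofReal (K.toReal + 1) * D ^ (1 / 2 : ℝ) * T ^ (1 / 2 : ℝ) := by
        gcongr
        rw [ENNReal.le_ofReal_iff_toReal_le hKt (by positivity)]
        linarith
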